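/- Let C and D be categories, E : D → C and F : C → D functors, and suppose given an adjunction E ⊣ F whose counit ε : E ∘ F → id_C is an isomorphism of functors. For a natural endomorphism z of the identity functor of D, define Z(E)(z), at each object N of C, as the composite ε_N ∘ E(z_{F(N)}) ∘ (ε_N)^{-1} : N → N. Then: (i) Z(E)(z) is a natural endomorphism of the identity functor of C, so Z(E) defines a map End(id_D) → End(id_C); (ii) Z(E) is a homomorphism of monoids for composition (and of rings when C and D are preadditive), sending the identity to the identity; (iii) for every object M of D one has (Z(E)(z))_{E(M)} = E(z_M), i.e. the square formed by evaluation of the centers at M and at E(M) and by the map induced by E on endomorphisms commutes. -/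

import Mathlib

open CategoryTheory

/-!
A functor `E` whose right adjoint has invertible counit is a localization, so a central element `z`
of `D` descends uniquely along `E` to a central element of `C` restricting to `E(z_M)` on `E(M)`.
Naturality along `ε_N : E(F(N)) ≅ N` then forces its value at `N` to be `ε_N ∘ E(z_{F(N)}) ∘ ε_N⁻¹`.
-/

section

variable {C D : Type*} [Category C] [Category D]

/-- The monoid homomorphism between centers induced by a localization functor `L`. It underlies the
ring homomorphism `CatCenter.localizationRingHom` of the preadditive case. -/
noncomputable def catCenterLocalizationHom (L : D ⥤ C) (W : MorphismProperty D)
    [L.IsLocalization W] : CatCenter D →* CatCenter C where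
  toFun z := z.localization L W
  map_one' := CatCenter.localization_one L W
  map_mul' x y := CatCenter.localization_mul x y L W

lemma catCenter_localization_app_of_iso (L : D ⥤ C) (W : MorphismProperty D)
    [L.IsLocalization W] (z : CatCenter D) {M : D} {N : C} (e : L.obj M ≅ N) :
    (z.localization L W).app N = e.inv ≫ L.map (z.app M) ≫ e.hom := by
  rw [Iso.eq_inv_comp, CatCenter.naturality, CatCenter.localization_app]

lemma isLocalization_of_isIso_counit {E : D ⥤ C} {F : C ⥤ D} (adj : E ⊣ F) [IsIso adj.counit] :
    E.IsLocalization ((MorphismProperty.isomorphisms C).inverseImage E) :=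
  have : F.Full := adj.fullyFaithfulROfIsIsoCounit.full
  have : F.Faithful := adj.fullyFaithfulROfIsIsoCounit.faithful
  adj.isLocalization

theorem stmt_7_general (E : D ⥤ C) (W : MorphismProperty D) [E.IsLocalization W] :
    ∃ Z : End (𝟭 D) →* End (𝟭 C),
      (∀ (z : End (𝟭 D)) {M : D} {N : C} (e : E.obj M ≅ N),
        (Z z).app N = e.inv ≫ E.map (z.app M) ≫ e.hom) ∧
      (∀ (z : End (𝟭 D)) (M : D), (Z z).app (E.obj M) = E.map (z.app M)) :=
  ⟨catCenterLocalizationHom E W,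
    fun z _ _ => catCenter_localization_app_of_iso E W z,
    fun z => CatCenter.localization_app z E W⟩

end

/-- Let `E : D ⥤ C` and `F : C ⥤ D` with an adjunction
`E ⊣ F` whose counit `ε : E ∘ F ⟶ id_C` is an isomorphism.  For
`z ∈ End (𝟭 D)` define `Z(E)(z)` at `N` as `ε_N ∘ E(z_{F N}) ∘ ε_N⁻¹`.
Then (i) this is a natural endomorphism of `𝟭 C`, so `Z(E)` is a map
`End (𝟭 D) → End (𝟭 C)`; (ii) `Z(E)` is a monoid homomorphism for
composition; (iii) for every `M` in `D` one has
`(Z(E)(z))_{E(M)} = E(z_M)`. -/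
theorem stmt_7 {C D : Type*} [Category C] [Category D]
    (E : D ⥤ C) (F : C ⥤ D) (adj : E ⊣ F) [IsIso adj.counit] :
    ∃ Z : End (𝟭 D) →* End (𝟭 C),
      (∀ (z : End (𝟭 D)) (N : C),
        (Z z).app N =
          inv (adj.counit.app N) ≫ E.map (z.app (F.obj N)) ≫ adj.counit.app N) ∧
      (∀ (z : End (𝟭 D)) (M : D), (Z z).app (E.obj M) = E.map (z.app M)) := by
  have := isLocalization_of_isIso_counit adj
  obtain ⟨Z, hZ_iso, hZ_obj⟩ := stmt_7_general E ((MorphismProperty.isomorphisms C).inverseImage E)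
  exact ⟨Z, fun z N => by simpa using hZ_iso z (asIso (adj.counit.app N)), hZ_obj⟩
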